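/- Let Γ be a finite connected simple graph with r+1 vertices, where r+1 ≥ 3, and n edges, where n ≥ 3, with Kirchhoff polynomial F_Γ, and let a ∈ (ℝ_{>0})^n. For each integer ℓ with 0 ≤ ℓ ≤ r−2, the polynomial ∂_a^ℓ F_Γ (the ℓ-fold application of the directional derivative ∂_a = Σ_{i=1}^n a_i·∂/∂x_i to F_Γ, a homogeneous polynomial of degree r−ℓ) is strictly homogeneous log-concave at a; in particular, the Hessian matrix of ∂_a^ℓ F_Γ evaluated at a is nonsingular with exactly one positive eigenvalue and n−1 negative eigenvalues. -/

import Mathlib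

/-!
By the matrix-tree theorem, `F(x) = det (∑ e, x e • v_e v_eᵀ)`, where `v_e` is the oriented
incidence vector of the edge `e` without the coordinate of a fixed root. On a line `a + t y` this
determinant factors as `F(a) ∏ i, (1 + t c i)` with `c` real, since the matrix at `a` is positive
definite, and `c ≠ 0` for `y ≠ 0`, since in a simple graph the matrices `v_e v_eᵀ` are linearly
independent. The first two derivatives of `F` at `a` in direction `y` are thus `F(a) ∑ c i` and
`F(a) ((∑ c i)² - ∑ (c i)²)`, and strict log-concavity is the Cauchy–Schwarz inequality
`(∑ c i)² ≤ r ∑ (c i)²`.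

By Euler's identity, `∂_a^ℓ` multiplies the value, the gradient and the Hessian of `F` at `a` by the
falling factorials of `r`, `r - 1` and `r - 2`. The matrix attached to `∂_a^ℓ F` and `s` is
therefore a positive multiple of the matrix attached to `F` and a rescaled `s`, and the rescaling
takes the threshold in degree `r - ℓ` to the one in degree `r`.

Finally, for `G` of degree `d ≥ 2` with `G(a) > 0`, the case `s = 1` makes the Hessian `H` of `G` at
`a` negative definite on the hyperplane orthogonal to the gradient, while
`aᵀ H a = d (d - 1) G(a) > 0` by Euler's identity; this determines the signature of `H`.
-/

open MvPolynomial

/-- A spanning tree of a graph `G`, given as a set `T` of edges of `G` with `|V| - 1` edges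
whose spanning subgraph is connected. -/
def IsSpanningTree {V : Type} [Fintype V] [DecidableEq V] (G : SimpleGraph V)
    (T : Finset G.edgeSet) : Prop :=
  T.card = Fintype.card V - 1 ∧
    (SimpleGraph.fromEdgeSet (Subtype.val '' (T : Set G.edgeSet))).Connected

open scoped Classical in
/-- The Kirchhoff polynomial of a graph. -/
noncomputable def kirchhoff {V : Type} [Fintype V] [DecidableEq V] (G : SimpleGraph V)
    [Fintype G.edgeSet] : MvPolynomial G.edgeSet ℝ :=
  ∑ T : Finset G.edgeSet, if IsSpanningTree G T then ∏ e ∈ T, X e else 0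

open Matrix

section DirectionalDerivative

variable {σ R : Type*} [CommRing R]

lemma commute_of_forall_X {D₁ D₂ : Derivation R (MvPolynomial σ R) (MvPolynomial σ R)}
    (h : ∀ i, D₁ (D₂ (X i)) = D₂ (D₁ (X i))) : Function.Commute D₁ D₂ := fun P => by
  have hbracket : ⁅D₁, D₂⁆ = 0 := derivation_ext fun i => by
    rw [Derivation.commutator_apply, h, sub_self, Derivation.zero_apply]
  rw [← sub_eq_zero, ← Derivation.commutator_apply, hbracket, Derivation.zero_apply]

lemma pderiv_commute (i j : σ) : Function.Commute (pderiv (R := R) i) (pderiv j) := by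
  classical
  exact commute_of_forall_X fun k => by simp [pderiv_X, Pi.single_apply, apply_ite]

/-- The directional derivative `∂_a = ∑ i, a i • ∂/∂x_i`, as the derivation with `∂_a x_i = a i`,
which makes sense for infinitely many variables as well. -/
noncomputable def dirDeriv (a : σ → R) : Derivation R (MvPolynomial σ R) (MvPolynomial σ R) :=
  mkDerivation R fun i => C (a i)

@[simp]
lemma dirDeriv_X (a : σ → R) (i : σ) : dirDeriv a (X i) = C (a i) :=
  mkDerivation_X R _ i

lemma pderiv_commute_dirDeriv (i : σ) (a : σ → R) :
    Function.Commute (pderiv i) (dirDeriv a) := by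
  classical
  exact commute_of_forall_X fun k => by simp [pderiv_X, Pi.single_apply, apply_ite]

lemma dirDeriv_eq_sum [Fintype σ] (a : σ → R) (P : MvPolynomial σ R) :
    dirDeriv a P = ∑ i, a i • pderiv i P := by
  classical
  have sum_apply (Q : MvPolynomial σ R) : (∑ i, a i • pderiv i) Q = ∑ i, a i • pderiv i Q := by
    rw [← Derivation.coeFnAddMonoidHom_apply, map_sum, Finset.sum_apply]; rfl
  have h : dirDeriv a = ∑ i, a i • pderiv i := derivation_ext fun k => by
    rw [sum_apply]
    simp [pderiv_X, Pi.single_apply, smul_eq_C_mul]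
  rw [h, sum_apply]

variable [Finite σ]

lemma isHomogeneous_dirDeriv {P : MvPolynomial σ R} {d : ℕ} (hP : P.IsHomogeneous d)
    (a : σ → R) : (dirDeriv a P).IsHomogeneous (d - 1) := by
  cases nonempty_fintype σ
  rw [dirDeriv_eq_sum]
  refine IsHomogeneous.sum _ _ _ fun i _ => ?_
  rw [smul_eq_C_mul]
  exact hP.pderiv.C_mul (a i)

lemma isHomogeneous_iterate_dirDeriv {P : MvPolynomial σ R} {d : ℕ} (hP : P.IsHomogeneous d)
    (a : σ → R) (ℓ : ℕ) : ((dirDeriv a)^[ℓ] P).IsHomogeneous (d - ℓ) := by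
  induction ℓ with
  | zero => exact hP
  | succ ℓ ih =>
    rw [Function.iterate_succ_apply', ← Nat.sub_sub]
    exact isHomogeneous_dirDeriv ih a

lemma eval_dirDeriv_self {P : MvPolynomial σ R} {d : ℕ} (hP : P.IsHomogeneous d) (a : σ → R) :
    eval a (dirDeriv a P) = d * eval a P := by
  cases nonempty_fintype σ
  simpa [dirDeriv_eq_sum] using congrArg (eval a) hP.sum_X_mul_pderiv

lemma eval_iterate_dirDeriv_self {P : MvPolynomial σ R} {d : ℕ} (hP : P.IsHomogeneous d)
    (a : σ → R) (ℓ : ℕ) :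
    eval a ((dirDeriv a)^[ℓ] P) = d.descFactorial ℓ * eval a P := by
  induction ℓ generalizing d P with
  | zero => simp
  | succ ℓ ih =>
    rw [Function.iterate_succ_apply, ih (isHomogeneous_dirDeriv hP a), eval_dirDeriv_self hP a]
    cases d with
    | zero => simp
    | succ d => rw [Nat.succ_descFactorial_succ, Nat.add_sub_cancel]; push_cast; ring

end DirectionalDerivative

section GradientHessian

variable {σ R : Type*} [CommRing R]

/-- The gradient of `P` at the point `a`. -/
noncomputable def gradientAt (a : σ → R) (P : MvPolynomial σ R) : σ → R :=
  fun i => eval a (pderiv i P)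

/-- The Hessian matrix of `P` at the point `a`. -/
noncomputable def hessianAt (a : σ → R) (P : MvPolynomial σ R) : Matrix σ σ R :=
  Matrix.of fun i j => eval a (pderiv i (pderiv j P))

lemma hessianAt_isSymm (a : σ → R) (P : MvPolynomial σ R) : (hessianAt a P).IsSymm :=
  Matrix.IsSymm.ext fun i j => congrArg (eval a) (pderiv_commute j i P)

lemma gradientAt_iterate_dirDeriv_self [Finite σ] {P : MvPolynomial σ R} {d : ℕ}
    (hP : P.IsHomogeneous d) (a : σ → R) (ℓ : ℕ) :
    gradientAt a ((dirDeriv a)^[ℓ] P) = ((d - 1).descFactorial ℓ : R) • gradientAt a P := by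
  ext i
  simp only [gradientAt, Pi.smul_apply, smul_eq_mul]
  rw [(pderiv_commute_dirDeriv i a).iterate_right ℓ P, eval_iterate_dirDeriv_self hP.pderiv]

lemma hessianAt_iterate_dirDeriv_self [Finite σ] {P : MvPolynomial σ R} {d : ℕ}
    (hP : P.IsHomogeneous d) (a : σ → R) (ℓ : ℕ) :
    hessianAt a ((dirDeriv a)^[ℓ] P) = ((d - 2).descFactorial ℓ : R) • hessianAt a P := by
  ext i j
  simp only [hessianAt, of_apply, Matrix.smul_apply, smul_eq_mul]
  rw [(pderiv_commute_dirDeriv j a).iterate_right ℓ P,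
    (pderiv_commute_dirDeriv i a).iterate_right ℓ, eval_iterate_dirDeriv_self hP.pderiv.pderiv,
    Nat.sub_sub]

variable [Fintype σ]

lemma gradientAt_dotProduct (a y : σ → R) (P : MvPolynomial σ R) :
    gradientAt a P ⬝ᵥ y = eval a (dirDeriv y P) := by
  simp [gradientAt, dotProduct, dirDeriv_eq_sum, mul_comm]

lemma hessianAt_mulVec (a y : σ → R) (P : MvPolynomial σ R) :
    hessianAt a P *ᵥ y = gradientAt a (dirDeriv y P) := by
  ext i
  simp [hessianAt, gradientAt, mulVec, dotProduct, dirDeriv_eq_sum, mul_comm]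

lemma dotProduct_hessianAt_mulVec (a y : σ → R) (P : MvPolynomial σ R) :
    y ⬝ᵥ (hessianAt a P *ᵥ y) = eval a (dirDeriv y (dirDeriv y P)) := by
  rw [hessianAt_mulVec, dotProduct_comm, gradientAt_dotProduct]

end GradientHessian

section LineRestriction

variable {σ R : Type*} [CommRing R]

/-- The univariate polynomial `P(a + t y)` in `t`: the restriction of `P` to a line. -/
noncomputable def lineRestrict (a y : σ → R) : MvPolynomial σ R →ₐ[R] Polynomial R :=
  aeval fun i => Polynomial.C (a i) + Polynomial.C (y i) * Polynomial.X

lemma lineRestrict_X (a y : σ → R) (i : σ) :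
    lineRestrict a y (X i) = Polynomial.C (a i) + Polynomial.C (y i) * Polynomial.X :=
  aeval_X _ i

lemma lineRestrict_C (a y : σ → R) (c : R) : lineRestrict a y (C c) = Polynomial.C c :=
  aeval_C _ c

lemma eval_lineRestrict (a y : σ → R) (P : MvPolynomial σ R) (t : R) :
    (lineRestrict a y P).eval t = eval (a + t • y) P := by
  induction P using MvPolynomial.induction_on with
  | C c => simp
  | add P Q hP hQ => simp [hP, hQ]
  | mul_X P i hP => simp [hP, lineRestrict_X, mul_comm t]

lemma derivative_lineRestrict (a y : σ → R) (P : MvPolynomial σ R) :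
    Polynomial.derivative (lineRestrict a y P) = lineRestrict a y (dirDeriv y P) := by
  induction P using MvPolynomial.induction_on with
  | C c => simp
  | add P Q hP hQ => simp only [map_add, hP, hQ]
  | mul_X P i hP =>
    simp only [map_mul, Polynomial.derivative_mul, hP, lineRestrict_X, Derivation.leibniz,
      dirDeriv_X, smul_eq_mul, map_add, lineRestrict_C, Polynomial.derivative_C,
      Polynomial.derivative_X]
    ring

variable {ι : Type*} (s : Finset ι) (c : ι → R)

lemma eval_zero_derivative_prod_one_add_C_mul_X :
    (Polynomial.derivative (∏ i ∈ s, (1 + Polynomial.C (c i) * Polynomial.X))).eval 0 =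
      ∑ i ∈ s, c i := by
  classical
  induction s using Finset.induction_on with
  | empty => simp
  | insert i s hi ih =>
    simp [Finset.prod_insert hi, Finset.sum_insert hi, ih, Polynomial.eval_prod]

lemma eval_zero_derivative_derivative_prod_one_add_C_mul_X :
    (Polynomial.derivative (Polynomial.derivative
      (∏ i ∈ s, (1 + Polynomial.C (c i) * Polynomial.X)))).eval 0 =
        (∑ i ∈ s, c i) ^ 2 - ∑ i ∈ s, c i ^ 2 := by
  classical
  induction s using Finset.induction_on with
  | empty => simp
  | insert i s hi ih =>
    simp [Finset.prod_insert hi, Finset.sum_insert hi, ih,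
      eval_zero_derivative_prod_one_add_C_mul_X]
    ring

lemma eval_dirDeriv_of_eval_add_smul_eq_prod [IsDomain R] [Infinite R] {P : MvPolynomial σ R}
    {a y : σ → R} {b : R} (h : ∀ t, eval (a + t • y) P = b * ∏ i ∈ s, (1 + t * c i)) :
    eval a (dirDeriv y P) = b * ∑ i ∈ s, c i ∧
      eval a (dirDeriv y (dirDeriv y P)) = b * ((∑ i ∈ s, c i) ^ 2 - ∑ i ∈ s, c i ^ 2) := by
  have hline : lineRestrict a y P =
      Polynomial.C b * ∏ i ∈ s, (1 + Polynomial.C (c i) * Polynomial.X) :=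
    Polynomial.funext fun t => by
      simp [eval_lineRestrict, h, Polynomial.eval_prod, mul_comm t]
  have eval_eq (Q : MvPolynomial σ R) : eval a Q = (lineRestrict a y Q).eval 0 := by
    simp [eval_lineRestrict]
  simp only [eval_eq, ← derivative_lineRestrict, hline, Polynomial.derivative_C_mul,
    Polynomial.eval_C_mul, eval_zero_derivative_prod_one_add_C_mul_X,
    eval_zero_derivative_derivative_prod_one_add_C_mul_X, and_self]

end LineRestriction

lemma one_sub_mul_sq_sum_lt_sum_sq {ι : Type*} [Fintype ι] {c : ι → ℝ} (hc : c ≠ 0) {s : ℝ}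
    (hs : ((Fintype.card ι : ℝ) - 1) / Fintype.card ι < s) :
    (1 - s) * (∑ i, c i) ^ 2 < ∑ i, c i ^ 2 := by
  obtain ⟨i, hi⟩ := Function.ne_iff.mp hc
  have hcard : (0 : ℝ) < Fintype.card ι := by exact_mod_cast Fintype.card_pos_iff.mpr ⟨i⟩
  have hpos : 0 < ∑ i, c i ^ 2 :=
    Finset.sum_pos' (fun j _ => sq_nonneg (c j)) ⟨i, Finset.mem_univ i, sq_pos_of_ne_zero hi⟩
  have hcs : (∑ i, c i) ^ 2 ≤ Fintype.card ι * ∑ i, c i ^ 2 := sq_sum_le_card_mul_sum_sq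
  rw [div_lt_iff₀ hcard] at hs
  rcases le_or_gt 1 s with h1 | h1
  · exact (mul_nonpos_of_nonpos_of_nonneg (by linarith) (sq_nonneg _)).trans_lt hpos
  · calc (1 - s) * (∑ i, c i) ^ 2
        ≤ (1 - s) * (Fintype.card ι * ∑ i, c i ^ 2) := by gcongr
      _ = (1 - s) * Fintype.card ι * ∑ i, c i ^ 2 := by ring
      _ < 1 * ∑ i, c i ^ 2 := by gcongr; linarith
      _ = ∑ i, c i ^ 2 := one_mul _

section SpectralTheory

open scoped ComplexOrder

variable {m 𝕜 : Type*} [Fintype m] [DecidableEq m] [RCLike 𝕜] {L M : Matrix m m 𝕜}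

open scoped MatrixOrder in
lemma exists_simultaneous_diagonalization (hL : L.PosDef) (hM : M.IsHermitian) :
    ∃ (Y : Matrix m m 𝕜) (c : m → ℝ), L = Yᴴ * Y ∧ M = Yᴴ * diagonal (RCLike.ofReal ∘ c) * Y := by
  obtain ⟨B, hB, rfl⟩ := CStarAlgebra.isStrictlyPositive_iff_eq_star_mul_self.mp
    hL.isStrictlyPositive
  lift B to (Matrix m m 𝕜)ˣ using hB
  set S : Matrix m m 𝕜 := (↑B⁻¹ : Matrix m m 𝕜)ᴴ * M * (↑B⁻¹ : Matrix m m 𝕜) with hS_def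
  have hM_eq : M = (B : Matrix m m 𝕜)ᴴ * S * B := by
    have hstar : (B : Matrix m m 𝕜)ᴴ * (↑B⁻¹ : Matrix m m 𝕜)ᴴ = 1 := by
      rw [← conjTranspose_mul, Units.inv_mul, conjTranspose_one]
    rw [hS_def, Matrix.mul_assoc, Matrix.mul_assoc, Units.inv_mul, Matrix.mul_one,
      ← Matrix.mul_assoc, hstar, Matrix.one_mul]
  have hS : S.IsHermitian := isHermitian_conjTranspose_mul_mul _ hM
  set U : unitaryGroup m 𝕜 := hS.eigenvectorUnitary
  have hU : (U : Matrix m m 𝕜) * (U : Matrix m m 𝕜)ᴴ = 1 := Unitary.coe_mul_star_self U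
  refine ⟨(U : Matrix m m 𝕜)ᴴ * B, hS.eigenvalues, ?_, ?_⟩
  · rw [conjTranspose_mul, conjTranspose_conjTranspose, Matrix.mul_assoc,
      ← Matrix.mul_assoc _ _ B.1, hU, Matrix.one_mul, star_eq_conjTranspose]
  · conv_lhs => rw [hM_eq, hS.spectral_theorem, Unitary.conjStarAlgAut_apply]
    simp only [conjTranspose_mul, conjTranspose_conjTranspose, Matrix.mul_assoc,
      star_eq_conjTranspose, U]

lemma exists_det_add_smul_eq (hL : L.PosDef) (hM : M.IsHermitian) :
    ∃ c : m → ℝ, (c = 0 → M = 0) ∧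
      ∀ t : ℝ, (L + (t : 𝕜) • M).det = L.det * ∏ i, (1 + (t : 𝕜) * c i) := by
  obtain ⟨Y, c, rfl, rfl⟩ := exists_simultaneous_diagonalization hL hM
  refine ⟨c, fun hc => by ext; simp [hc], fun t => ?_⟩
  have hsum : Yᴴ * Y + (t : 𝕜) • (Yᴴ * diagonal (RCLike.ofReal ∘ c) * Y) =
      Yᴴ * diagonal (fun i => 1 + (t : 𝕜) * c i) * Y := by
    have hdiag : diagonal (fun i => 1 + (t : 𝕜) * c i) =
        1 + (t : 𝕜) • diagonal (RCLike.ofReal ∘ c) := by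
      ext i j; by_cases h : i = j <;> simp [h, diagonal]
    rw [hdiag, Matrix.mul_add, Matrix.add_mul, Matrix.mul_one, Matrix.mul_smul, Matrix.smul_mul]
  rw [hsum, det_mul, det_mul, det_mul, det_diagonal]
  ring

end SpectralTheory

section Signature

variable {ι : Type*} [Fintype ι] [DecidableEq ι] {H : Matrix ι ι ℝ} (hH : H.IsHermitian)

lemma exists_dotProduct_mulVec_eq_sum_eigenvalues_mul_sq :
    ∃ U : Matrix ι ι ℝ, IsUnit U ∧
      ∀ c, (U *ᵥ c) ⬝ᵥ (H *ᵥ (U *ᵥ c)) = ∑ i, hH.eigenvalues i * c i ^ 2 := by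
  refine ⟨hH.eigenvectorUnitary, Unitary.isUnit_coe, fun c => ?_⟩
  have hdiag : (hH.eigenvectorUnitary : Matrix ι ι ℝ)ᵀ * H * hH.eigenvectorUnitary =
      diagonal hH.eigenvalues := by
    simpa [Unitary.conjStarAlgAut_star_apply, star_eq_conjTranspose] using
      hH.conjStarAlgAut_star_eigenvectorUnitary
  rw [← vecMul_transpose, ← dotProduct_mulVec, vecMul_transpose, mulVec_mulVec, mulVec_mulVec,
    hdiag]
  simp only [dotProduct, mulVec_diagonal]
  exact Finset.sum_congr rfl fun i _ => by ring

lemma exists_eigenvalues_pos {x : ι → ℝ} (hx : 0 < x ⬝ᵥ (H *ᵥ x)) :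
    ∃ i, 0 < hH.eigenvalues i := by
  obtain ⟨U, hU, hquad⟩ := exists_dotProduct_mulVec_eq_sum_eigenvalues_mul_sq hH
  obtain ⟨c, rfl⟩ := mulVec_surjective_iff_isUnit.mpr hU x
  by_contra! hle
  exact hx.not_ge <| (hquad c).trans_le <| Finset.sum_nonpos fun i _ =>
    mul_nonpos_of_nonpos_of_nonneg (hle i) (sq_nonneg _)

lemma eq_of_eigenvalues_nonneg_of_neg_on_hyperplane {g : ι → ℝ}
    (hneg : ∀ y, y ≠ 0 → g ⬝ᵥ y = 0 → y ⬝ᵥ (H *ᵥ y) < 0) {i j : ι}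
    (hi : 0 ≤ hH.eigenvalues i) (hj : 0 ≤ hH.eigenvalues j) : i = j := by
  obtain ⟨U, hU, hquad⟩ := exists_dotProduct_mulVec_eq_sum_eigenvalues_mul_sq hH
  by_contra hij
  -- The plane spanned by two eigenvectors meets every hyperplane in a nonzero vector.
  obtain ⟨c, hc, hsupp, hg⟩ : ∃ c : ι → ℝ, c ≠ 0 ∧ (∀ k, k ≠ i → k ≠ j → c k = 0) ∧
      g ⬝ᵥ (U *ᵥ c) = 0 := by
    set p := g ⬝ᵥ U.col i with hp
    set q := g ⬝ᵥ U.col j with hq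
    by_cases hp0 : p = 0
    · exact ⟨Pi.single i 1, by simp, fun k hki _ => by simp [hki],
        by simpa using hp0⟩
    · refine ⟨Pi.single i (-q) + Pi.single j p, fun h => hp0 ?_,
        fun k hki hkj => by simp [hki, hkj],
        by simp [mulVec_add, dotProduct_add, mulVec_single, ← hp, ← hq]; ring⟩
      simpa [Ne.symm hij] using congrFun h j
  refine (hneg (U *ᵥ c) ?_ hg).not_ge ?_
  · exact fun h => hc (mulVec_injective_of_isUnit hU (h.trans (mulVec_zero U).symm))
  · rw [hquad]
    refine Finset.sum_nonneg fun k _ => ?_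
    rcases eq_or_ne k i with rfl | hki
    · positivity
    rcases eq_or_ne k j with rfl | hkj
    · positivity
    · simp [hsupp k hki hkj]

lemma signature_of_neg_on_hyperplane {g x : ι → ℝ}
    (hneg : ∀ y, y ≠ 0 → g ⬝ᵥ y = 0 → y ⬝ᵥ (H *ᵥ y) < 0) (hx : 0 < x ⬝ᵥ (H *ᵥ x)) :
    H.det ≠ 0 ∧ (Finset.univ.filter fun i => 0 < hH.eigenvalues i).card = 1 ∧
      (Finset.univ.filter fun i => hH.eigenvalues i < 0).card = Fintype.card ι - 1 := by
  obtain ⟨k, hk⟩ := exists_eigenvalues_pos hH hx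
  have hrest (i : ι) : hH.eigenvalues i < 0 ↔ i ≠ k := by
    refine ⟨by rintro hi rfl; exact hi.not_gt hk, fun hik => ?_⟩
    by_contra! hi
    exact hik (eq_of_eigenvalues_nonneg_of_neg_on_hyperplane hH hneg hi hk.le)
  have hpos (i : ι) : 0 < hH.eigenvalues i ↔ i = k :=
    ⟨fun hi => by_contra fun hik => ((hrest i).mpr hik).not_gt hi, by rintro rfl; exact hk⟩
  refine ⟨?_, ?_, ?_⟩
  · rw [hH.det_eq_prod_eigenvalues, Finset.prod_ne_zero_iff]
    intro i _
    rcases eq_or_ne i k with rfl | hik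
    · simpa using hk.ne'
    · simpa using ((hrest i).mpr hik).ne
  · simp [hpos, Finset.filter_eq']
  · simp [hrest, Finset.filter_ne']

end Signature

-- The right-hand side is the ratio of the thresholds `(d - 1) / d` in degrees `k + ℓ + 2` and
-- `k + 2`.
lemma descFactorial_sq_div_mul (k ℓ : ℕ) :
    ((k + ℓ + 1).descFactorial ℓ : ℝ) ^ 2 /
        ((k + ℓ + 2).descFactorial ℓ * (k + ℓ).descFactorial ℓ) =
      ((k + ℓ + 1) / (k + ℓ + 2)) / ((k + 1) / (k + 2)) := by
  have h₀ : (0 : ℝ) < (k + ℓ + 2).descFactorial ℓ := by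
    exact_mod_cast Nat.descFactorial_pos.mpr (by omega)
  have h₂ : (0 : ℝ) < (k + ℓ).descFactorial ℓ := by
    exact_mod_cast Nat.descFactorial_pos.mpr (by omega)
  have h₀₁ : (k + 2 : ℝ) * (k + ℓ + 2).descFactorial ℓ =
      (k + ℓ + 2) * (k + ℓ + 1).descFactorial ℓ := by
    have := Nat.succ_descFactorial (k + ℓ + 1) ℓ
    rw [show k + ℓ + 1 + 1 - ℓ = k + 2 by omega] at this
    exact_mod_cast this
  have h₁₂ : (k + 1 : ℝ) * (k + ℓ + 1).descFactorial ℓ =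
      (k + ℓ + 1) * (k + ℓ).descFactorial ℓ := by
    have := Nat.succ_descFactorial (k + ℓ) ℓ
    rw [show k + ℓ + 1 - ℓ = k + 1 by omega] at this
    exact_mod_cast this
  field_simp
  linear_combination (k + ℓ + 2) * ((k + ℓ + 1).descFactorial ℓ : ℝ) * h₁₂ -
    (k + ℓ + 1) * ((k + ℓ).descFactorial ℓ : ℝ) * h₀₁

section LogConcavity

variable {σ : Type*} {a : σ → ℝ} {P : MvPolynomial σ ℝ} {d : ℕ}

/-- Strict homogeneous log-concavity at `a` of a homogeneous polynomial `P` of degree `d`; the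
degree is a parameter of the definition. -/
def IsStrictlyHomogLogConcaveAt (a : σ → ℝ) (d : ℕ) (P : MvPolynomial σ ℝ) : Prop :=
  ∀ s : ℝ, ((d : ℝ) - 1) / d < s →
    ((-eval a P) • hessianAt a P +
      s • vecMulVec (gradientAt a P) (gradientAt a P)).PosDef

lemma IsStrictlyHomogLogConcaveAt.iterate_dirDeriv [Finite σ]
    (h : IsStrictlyHomogLogConcaveAt a d P) (hP : P.IsHomogeneous d) {ℓ : ℕ}
    (hℓ : ℓ + 2 ≤ d) : IsStrictlyHomogLogConcaveAt a (d - ℓ) ((dirDeriv a)^[ℓ] P) := by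
  intro s hs
  obtain ⟨k, rfl⟩ : ∃ k, d = k + ℓ + 2 := ⟨d - (ℓ + 2), by omega⟩
  have hs_lt : (k + 1 : ℝ) / (k + 2) < s := by
    convert hs using 2 <;> rw [show k + ℓ + 2 - ℓ = k + 2 by omega] <;> push_cast <;> ring
  rw [eval_iterate_dirDeriv_self hP, gradientAt_iterate_dirDeriv_self hP,
    hessianAt_iterate_dirDeriv_self hP, show k + ℓ + 2 - 1 = k + ℓ + 1 from rfl,
    Nat.add_sub_cancel]
  have hratio := descFactorial_sq_div_mul k ℓ
  have hc₀ : (0 : ℝ) < (k + ℓ + 2).descFactorial ℓ := by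
    exact_mod_cast Nat.descFactorial_pos.mpr (by omega)
  have hc₂ : (0 : ℝ) < (k + ℓ).descFactorial ℓ := by
    exact_mod_cast Nat.descFactorial_pos.mpr (by omega)
  generalize ((k + ℓ + 2).descFactorial ℓ : ℝ) = c₀ at *
  generalize ((k + ℓ + 1).descFactorial ℓ : ℝ) = c₁ at *
  generalize ((k + ℓ).descFactorial ℓ : ℝ) = c₂ at *
  have hs' : ((k + ℓ + 2 : ℕ) - 1 : ℝ) / (k + ℓ + 2 : ℕ) < s * (c₁ ^ 2 / (c₀ * c₂)) := by
    rw [hratio]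
    calc ((k + ℓ + 2 : ℕ) - 1 : ℝ) / (k + ℓ + 2 : ℕ)
        = ((k + 1) / (k + 2)) * ((k + ℓ + 1) / (k + ℓ + 2) / ((k + 1) / (k + 2)) : ℝ) := by
          push_cast; field_simp; ring
      _ < s * ((k + ℓ + 1) / (k + ℓ + 2) / ((k + 1) / (k + 2))) := by
          gcongr
  convert (h _ hs').smul (mul_pos hc₀ hc₂) using 1
  rw [smul_add, smul_smul, smul_smul, smul_smul, smul_vecMulVec, vecMulVec_smul, smul_smul,
    smul_smul]
  congr 2 <;> field_simp

variable [Fintype σ]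

lemma isStrictlyHomogLogConcaveAt_iff :
    IsStrictlyHomogLogConcaveAt a d P ↔ ∀ s : ℝ, ((d : ℝ) - 1) / d < s → ∀ y : σ → ℝ, y ≠ 0 →
      0 < -eval a P * (y ⬝ᵥ (hessianAt a P *ᵥ y)) + s * (gradientAt a P ⬝ᵥ y) ^ 2 := by
  have hherm (s : ℝ) : ((-eval a P) • hessianAt a P +
      s • vecMulVec (gradientAt a P) (gradientAt a P)).IsHermitian := by
    rw [IsHermitian, conjTranspose_eq_transpose_of_trivial, transpose_add, transpose_smul,
      transpose_smul, transpose_vecMulVec, hessianAt_isSymm]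
  simp only [IsStrictlyHomogLogConcaveAt, posDef_iff_dotProduct_mulVec, hherm, true_and,
    star_trivial, add_mulVec, smul_mulVec, dotProduct_add, dotProduct_smul, vecMulVec_mulVec,
    op_smul_eq_smul, smul_eq_mul, dotProduct_comm _ (gradientAt a P), sq]

namespace IsStrictlyHomogLogConcaveAt

lemma dotProduct_hessianAt_mulVec_neg (h : IsStrictlyHomogLogConcaveAt a d P) (hd : d ≠ 0)
    (hpos : 0 < eval a P) {y : σ → ℝ} (hy : y ≠ 0) (hgy : gradientAt a P ⬝ᵥ y = 0) :
    y ⬝ᵥ (hessianAt a P *ᵥ y) < 0 := by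
  have hs : ((d : ℝ) - 1) / d < 1 := by
    rw [div_lt_one (by positivity)]; linarith
  have hquad := isStrictlyHomogLogConcaveAt_iff.mp h 1 hs y hy
  rw [hgy] at hquad
  nlinarith

lemma hessianAt_signature [DecidableEq σ] (h : IsStrictlyHomogLogConcaveAt a d P)
    (hP : P.IsHomogeneous d) (hd : 2 ≤ d) (hpos : 0 < eval a P)
    (hherm : (hessianAt a P).IsHermitian) :
    (hessianAt a P).det ≠ 0 ∧
      (Finset.univ.filter fun i => 0 < hherm.eigenvalues i).card = 1 ∧
      (Finset.univ.filter fun i => hherm.eigenvalues i < 0).card = Fintype.card σ - 1 := by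
  refine signature_of_neg_on_hyperplane (x := a) hherm
    (fun y hy hgy => h.dotProduct_hessianAt_mulVec_neg (by omega) hpos hy hgy) ?_
  rw [dotProduct_hessianAt_mulVec, eval_dirDeriv_self (isHomogeneous_dirDeriv hP a),
    eval_dirDeriv_self hP]
  have : 0 < d - 1 := by omega
  positivity

end IsStrictlyHomogLogConcaveAt

lemma isStrictlyHomogLogConcaveAt_of_eval_eq_det {m : Type*} [Fintype m] [DecidableEq m]
    {A : σ → Matrix m m ℝ} (hA : ∀ i, (A i).IsHermitian) (hind : LinearIndependent ℝ A)
    (hP : ∀ x, eval x P = (∑ i, x i • A i).det) (hpos : (∑ i, a i • A i).PosDef) :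
    IsStrictlyHomogLogConcaveAt a (Fintype.card m) P := by
  refine isStrictlyHomogLogConcaveAt_iff.mpr fun s hs y hy => ?_
  obtain ⟨c, hc, hdet⟩ := exists_det_add_smul_eq hpos
    (isSelfAdjoint_sum Finset.univ fun i _ => (hA i).smul (IsSelfAdjoint.all (y i)))
  have hc0 : c ≠ 0 := fun h0 => hy (funext (Fintype.linearIndependent_iff.mp hind y (hc h0)))
  have hline (t : ℝ) : eval (a + t • y) P = eval a P * ∏ i, (1 + t * c i) := by
    simp only [hP, Pi.add_apply, Pi.smul_apply, add_smul, smul_eq_mul, mul_smul,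
      Finset.sum_add_distrib, ← Finset.smul_sum]
    exact hdet t
  obtain ⟨hfst, hsnd⟩ := eval_dirDeriv_of_eval_add_smul_eq_prod Finset.univ c hline
  have hP_pos : 0 < eval a P := hP a ▸ hpos.det_pos
  rw [gradientAt_dotProduct, dotProduct_hessianAt_mulVec, hfst, hsnd]
  calc 0 < eval a P ^ 2 * (∑ i, c i ^ 2 - (1 - s) * (∑ i, c i) ^ 2) :=
        mul_pos (by positivity) (sub_pos.mpr (one_sub_mul_sq_sum_lt_sum_sq hc0 hs))
    _ = _ := by ring

end LogConcavity

section CauchyBinet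

variable {m ι R : Type*} [Fintype m] [DecidableEq m] [CommRing R]

lemma det_sum_vecMulVec_eq_sum_piFinset (s : Finset ι) (u w : ι → m → R) :
    (∑ e ∈ s, vecMulVec (u e) (w e)).det =
      ∑ f ∈ Fintype.piFinset fun _ : m => s,
        (∏ p, u (f p) p) * (Matrix.of fun p => w (f p)).det := by
  have hrows : ∑ e ∈ s, vecMulVec (u e) (w e) = Matrix.of fun p => ∑ e ∈ s, u e p • w e := by
    ext p q
    simp [Matrix.sum_apply, vecMulVec_apply]
  rw [hrows]
  refine (detRowAlternating.toMultilinearMap.map_sum_finset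
    (fun p e => u e p • w e) fun _ => s).trans (Finset.sum_congr rfl fun f _ => ?_)
  exact detRowAlternating.toMultilinearMap.map_smul_univ (fun p => u (f p) p) fun p => w (f p)

-- Among the maps `f : m → ι`, only the injective ones contribute to the expansion of the
-- determinant, and each of these takes its values in exactly one `T` with `|T| = |m|`.
theorem det_sum_vecMulVec [Fintype ι] (u w : ι → m → R) :
    (∑ e, vecMulVec (u e) (w e)).det =
      ∑ T ∈ Finset.powersetCard (Fintype.card m) Finset.univ,
        (∑ e ∈ T, vecMulVec (u e) (w e)).det := by
  classical
  simp only [det_sum_vecMulVec_eq_sum_piFinset]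
  rw [Finset.sum_comm' (t' := (Finset.univ : Finset (m → ι))) (s' := fun f : m → ι =>
    {T ∈ Finset.powersetCard (Fintype.card m) (Finset.univ : Finset ι) | ∀ p, f p ∈ T}) (by simp),
    Fintype.piFinset_univ]
  refine Finset.sum_congr rfl fun f _ => ?_
  by_cases hf : Function.Injective f
  · have hcard : (Finset.univ.image f).card = Fintype.card m := Finset.card_image_of_injective _ hf
    have himage :
        {T ∈ Finset.powersetCard (Fintype.card m) (Finset.univ : Finset ι) | ∀ p, f p ∈ T} =
          {Finset.univ.image f} := by
      ext T
      simp only [Finset.mem_filter, Finset.mem_powersetCard_univ, Finset.mem_singleton]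
      constructor
      · rintro ⟨hT, hfT⟩
        exact (Finset.eq_of_subset_of_card_le (Finset.image_subset_iff.mpr fun p _ => hfT p)
          (by rw [hcard, hT])).symm
      · rintro rfl
        exact ⟨hcard, fun p => Finset.mem_image_of_mem f (Finset.mem_univ p)⟩
    rw [himage, Finset.sum_singleton]
  · obtain ⟨p, q, hpq, hne⟩ := Function.not_injective_iff.mp hf
    rw [det_zero_of_row_eq hne (congrArg w hpq), mul_zero, Finset.sum_const_zero]

lemma det_sum_smul_vecMulVec_of_equiv {T : Finset ι} (σ : m ≃ T) (x : ι → R) (u w : ι → m → R) :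
    (∑ e ∈ T, x e • vecMulVec (u e) (w e)).det =
      (∏ e ∈ T, x e) * ((Matrix.of fun p => u (σ p)).det * (Matrix.of fun p => w (σ p)).det) := by
  have hprod : ∑ e ∈ T, x e • vecMulVec (u e) (w e) =
      (Matrix.of fun p => u (σ p))ᵀ * diagonal (fun p => x (σ p)) *
        Matrix.of fun p => w (σ p) := by
    ext p q
    rw [← Finset.sum_coe_sort, ← σ.sum_comp]
    rw [Matrix.mul_apply]
    simp only [Matrix.sum_apply, Matrix.smul_apply, vecMulVec_apply, mul_diagonal, transpose_apply,
      of_apply, smul_eq_mul]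
    exact Finset.sum_congr rfl fun _ _ => by ring
  rw [hprod, det_mul, det_mul, det_transpose, det_diagonal, ← Finset.prod_coe_sort T,
    ← σ.prod_comp]
  ring

end CauchyBinet

section SpanningVectors

variable {m ι : Type*}

lemma eq_zero_of_forall_dotProduct_eq_zero [Fintype m] {R : Type*} [CommRing R] {v : ι → m → R}
    (hv : Submodule.span R (Set.range v) = ⊤) {z : m → R} (hz : ∀ e, v e ⬝ᵥ z = 0) : z = 0 := by
  refine dotProduct_eq_zero z fun w => ?_
  rw [dotProduct_comm]
  have hw : w ∈ Submodule.span R (Set.range v) := hv ▸ Submodule.mem_top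
  induction hw using Submodule.span_induction with
  | mem w hw => obtain ⟨e, rfl⟩ := hw; exact hz e
  | zero => exact zero_dotProduct z
  | add w₁ w₂ _ _ h₁ h₂ => rw [add_dotProduct, h₁, h₂, add_zero]
  | smul c w _ hw => rw [smul_dotProduct, hw, smul_zero]

lemma span_range_row_eq_top_iff_isUnit_det [Fintype m] [DecidableEq m] {R : Type*} [CommRing R]
    {A : Matrix m m R} : Submodule.span R (Set.range A.row) = ⊤ ↔ IsUnit A.det := by
  rw [← range_vecMulLinear, LinearMap.range_eq_top, ← isUnit_iff_isUnit_det,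
    ← vecMul_surjective_iff_isUnit]
  rfl

lemma sum_smul_vecMulVec_self_posDef [Finite m] [Fintype ι] {v : ι → m → ℝ}
    (hv : Submodule.span ℝ (Set.range v) = ⊤) {a : ι → ℝ} (ha : ∀ e, 0 < a e) :
    (∑ e, a e • vecMulVec (v e) (v e)).PosDef := by
  cases nonempty_fintype m
  have hherm : (∑ e, a e • vecMulVec (v e) (v e)).IsHermitian := by
    simp [IsHermitian, conjTranspose_eq_transpose_of_trivial, transpose_sum, transpose_vecMulVec]
  refine PosDef.of_dotProduct_mulVec_pos hherm fun z hz => ?_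
  have hquad : star z ⬝ᵥ ((∑ e, a e • vecMulVec (v e) (v e)) *ᵥ z) =
      ∑ e, a e * (v e ⬝ᵥ z) ^ 2 := by
    simp only [star_trivial, dotProduct_comm z, sum_mulVec, sum_dotProduct, smul_mulVec,
      smul_dotProduct, vecMulVec_mulVec, op_smul_eq_smul, sq, smul_eq_mul]
  rw [hquad]
  obtain ⟨e, he⟩ : ∃ e, v e ⬝ᵥ z ≠ 0 := by
    by_contra! h
    exact hz (eq_zero_of_forall_dotProduct_eq_zero hv h)
  exact Finset.sum_pos' (fun i _ => mul_nonneg (ha i).le (sq_nonneg _))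
    ⟨e, Finset.mem_univ e, mul_pos (ha e) (sq_pos_of_ne_zero he)⟩

end SpanningVectors

section IncidenceVectors

variable {V : Type*}

lemma mk_out_eq (e : Sym2 V) : s(e.out.1, e.out.2) = e := Quot.out_eq e

lemma eq_mk_iff_out_eq_or {e : Sym2 V} {u w : V} :
    e = s(u, w) ↔ e.out.1 = u ∧ e.out.2 = w ∨ e.out.1 = w ∧ e.out.2 = u := by
  rw [← Sym2.eq_iff, mk_out_eq]

lemma edgeSet_fromEdgeSet_of_subset {G : SimpleGraph V} {S : Set (Sym2 V)} (hS : S ⊆ G.edgeSet) :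
    (SimpleGraph.fromEdgeSet S).edgeSet = S := by
  rw [SimpleGraph.edgeSet_fromEdgeSet, sdiff_eq_left]
  exact Set.disjoint_left.mpr fun _ he => G.edgeSet_subset_compl_diagSet (hS he)

variable [DecidableEq V]

/-- The standard basis vector at `u`, with the coordinate of the root `o` deleted. -/
def rootedSingle (R : Type*) [CommRing R] (o u : V) : {v : V // v ≠ o} → R :=
  fun p => (Pi.single u 1 : V → R) p

/-- The column at `e` of the oriented incidence matrix, with the row of the root `o` deleted. The
edge is oriented by `Quot.out`. -/
noncomputable def incVec (R : Type*) [CommRing R] (o : V) (e : Sym2 V) : {v : V // v ≠ o} → R :=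
  rootedSingle R o e.out.1 - rootedSingle R o e.out.2

variable {R : Type*} [CommRing R]

lemma intCast_incVec (o : V) (e : Sym2 V) (p : {v : V // v ≠ o}) :
    (incVec ℤ o e p : R) = incVec R o e p := by
  simp [incVec, rootedSingle, Pi.single_apply]

lemma rootedSingle_root (o : V) : rootedSingle R o o = 0 :=
  funext fun p => Pi.single_eq_of_ne p.2 1

lemma rootedSingle_coe {o : V} (p : {v : V // v ≠ o}) : rootedSingle R o p = Pi.single p 1 := by
  ext q
  simp [rootedSingle, Pi.single_apply, Subtype.ext_iff]

lemma incVec_mk_eq_or (o u w : V) :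
    incVec R o s(u, w) = rootedSingle R o u - rootedSingle R o w ∨
      incVec R o s(u, w) = rootedSingle R o w - rootedSingle R o u := by
  rcases eq_mk_iff_out_eq_or.mp (rfl : s(u, w) = s(u, w)) with ⟨hu, hw⟩ | ⟨hu, hw⟩
  · exact .inl (by rw [incVec, hu, hw])
  · exact .inr (by rw [incVec, hu, hw])

lemma incVec_dotProduct [Fintype V] (o : V) (e : Sym2 V) (f : V → R) :
    incVec R o e ⬝ᵥ (fun p => f p - f o) = f e.out.1 - f e.out.2 := by
  have hsingle (u : V) : rootedSingle R o u ⬝ᵥ (fun p => f p - f o) = f u - f o := by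
    rcases eq_or_ne u o with rfl | hu
    · rw [rootedSingle_root, zero_dotProduct, sub_self]
    · rw [show rootedSingle R o u = _ from rootedSingle_coe ⟨u, hu⟩, single_one_dotProduct]
  rw [incVec, sub_dotProduct, hsingle, hsingle]
  ring

lemma single_sub_mul_single_sub {u w : V} (huw : u ≠ w) (e : Sym2 V) :
    ((Pi.single u 1 : V → R) e.out.1 - (Pi.single u 1 : V → R) e.out.2) *
        ((Pi.single w 1 : V → R) e.out.1 - (Pi.single w 1 : V → R) e.out.2) =
      if e = s(u, w) then -1 else 0 := by
  simp only [eq_mk_iff_out_eq_or, Pi.single_apply]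
  grind

-- Pairing with the basis vectors of the two ends of an edge isolates the coefficient of that edge.
lemma linearIndependent_vecMulVec_incVec [Finite V] (o : V) (G : SimpleGraph V) :
    LinearIndependent R fun e : G.edgeSet => vecMulVec (incVec R o e) (incVec R o e) := by
  cases nonempty_fintype V
  cases nonempty_fintype G.edgeSet
  refine Fintype.linearIndependent_iff.mpr fun y hy ⟨e, he⟩ => ?_
  have hpair (f g : V → R) :
      ∑ e : G.edgeSet, y e * ((f e.1.out.1 - f e.1.out.2) * (g e.1.out.1 - g e.1.out.2)) = 0 := by
    have h := congrArg (fun M : Matrix {v : V // v ≠ o} {v : V // v ≠ o} R =>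
      (M *ᵥ fun p => g p - g o) ⬝ᵥ fun p => f p - f o) hy
    simpa only [sum_mulVec, sum_dotProduct, smul_mulVec, smul_dotProduct, vecMulVec_mulVec,
      op_smul_eq_smul, incVec_dotProduct, zero_mulVec, zero_dotProduct, smul_eq_mul,
      mul_comm (g _ - g _)] using h
  induction e with
  | _ u w =>
    have h := hpair (Pi.single u 1) (Pi.single w 1)
    simp only [single_sub_mul_single_sub (G.ne_of_adj he), mul_ite, mul_zero] at h
    rw [Fintype.sum_eq_single ⟨s(u, w), he⟩
      fun e' he' => if_neg fun h' => he' (Subtype.ext h'), if_pos rfl] at h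
    simpa using h

lemma span_image_incVec_eq_top [Finite V] (o : V) {G : SimpleGraph V} (hG : G.Connected) :
    Submodule.span R (incVec R o '' G.edgeSet) = ⊤ := by
  set W := Submodule.span R (incVec R o '' G.edgeSet)
  have hadj {u w : V} (huw : G.Adj u w) (hu : rootedSingle R o u ∈ W) :
      rootedSingle R o w ∈ W := by
    have hinc : incVec R o s(u, w) ∈ W := Submodule.subset_span ⟨_, huw, rfl⟩
    rcases incVec_mk_eq_or (R := R) o u w with h | h <;> rw [h] at hinc
    · exact (Submodule.sub_mem_iff_right W hu).mp hinc
    · exact (Submodule.sub_mem_iff_left W hu).mp hinc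
  have hmem (u : V) : rootedSingle R o u ∈ W := by
    induction (SimpleGraph.reachable_iff_reflTransGen o u).mp (hG.preconnected o u) with
    | refl => exact rootedSingle_root (R := R) o ▸ W.zero_mem
    | tail _ h ih => exact hadj h ih
  rw [eq_top_iff, ← (Pi.basisFun R {v : V // v ≠ o}).span_eq, Submodule.span_le]
  rintro _ ⟨p, rfl⟩
  rw [Pi.basisFun_apply, ← rootedSingle_coe]
  exact hmem p

-- The indicator of the component of the root is orthogonal to all incidence vectors.
lemma connected_of_span_image_incVec_eq_top [Finite V] [Nontrivial R] {o : V} {G : SimpleGraph V}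
    (hG : Submodule.span R (incVec R o '' G.edgeSet) = ⊤) : G.Connected := by
  classical
  cases nonempty_fintype V
  refine (SimpleGraph.connected_iff_exists_forall_reachable G).mpr ⟨o, fun u => ?_⟩
  let f : V → R := fun v => if G.Reachable o v then 1 else 0
  have horth (e : G.edgeSet) : incVec R o e ⬝ᵥ (fun p => f p - f o) = 0 := by
    have hadj : G.Adj e.1.out.1 e.1.out.2 := by
      rw [← SimpleGraph.mem_edgeSet, mk_out_eq]
      exact e.2
    have hreach : G.Reachable o e.1.out.1 ↔ G.Reachable o e.1.out.2 :=
      ⟨fun h => h.trans hadj.reachable, fun h => h.trans hadj.symm.reachable⟩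
    rw [incVec_dotProduct, sub_eq_zero]
    exact if_congr hreach rfl rfl
  rw [Set.image_eq_range] at hG
  have hzero := eq_zero_of_forall_dotProduct_eq_zero hG horth
  by_contra hu
  have huo : u ≠ o := by rintro rfl; exact hu (SimpleGraph.Reachable.refl u)
  simpa [f, hu] using congrFun hzero ⟨u, huo⟩

section ReducedLaplacian

variable (G : SimpleGraph V) [Fintype G.edgeSet]

/-- The Laplacian of `G` with edge weights `x`, with the row and column of the root `o` deleted. -/
noncomputable def reducedLaplacian (o : V) (x : G.edgeSet → ℝ) :
    Matrix {v : V // v ≠ o} {v : V // v ≠ o} ℝ :=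
  ∑ e, x e • vecMulVec (incVec ℝ o e) (incVec ℝ o e)

variable {G} in
lemma reducedLaplacian_posDef [Finite V] {a : G.edgeSet → ℝ} (hG : G.Connected) (ha : ∀ e, 0 < a e)
    (o : V) :
    (reducedLaplacian G o a).PosDef := by
  refine sum_smul_vecMulVec_self_posDef ?_ ha
  rw [← Set.image_eq_range]
  exact span_image_incVec_eq_top o hG

end ReducedLaplacian

end IncidenceVectors

section Kirchhoff

variable {V : Type} [Fintype V] [DecidableEq V] (G : SimpleGraph V)

section Minors

variable {G} {o : V} {T : Finset G.edgeSet} (τ : {v : V // v ≠ o} ≃ T)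

lemma isUnit_det_incVec_iff {R : Type*} [CommRing R] [Nontrivial R] :
    IsUnit (Matrix.of fun p => incVec R o (τ p)).det ↔
      (SimpleGraph.fromEdgeSet (Subtype.val '' (T : Set G.edgeSet))).Connected := by
  have hrange : Set.range (fun p => (τ p : G.edgeSet)) = T := by
    rw [← Subtype.range_coe (s := (T : Set G.edgeSet))]
    exact τ.surjective.range_comp _
  have hrow : Set.range (Matrix.of fun p => incVec R o (τ p)).row =
      incVec R o '' (SimpleGraph.fromEdgeSet (Subtype.val '' (T : Set G.edgeSet))).edgeSet := by
    rw [edgeSet_fromEdgeSet_of_subset (Subtype.coe_image_subset _ _), ← hrange, ← Set.range_comp,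
      ← Set.range_comp]
    rfl
  rw [← span_range_row_eq_top_iff_isUnit_det, hrow]
  exact ⟨connected_of_span_image_incVec_eq_top, span_image_incVec_eq_top o⟩

open scoped Classical in
lemma det_incVec_mul_self :
    (Matrix.of fun p => incVec ℝ o (τ p)).det * (Matrix.of fun p => incVec ℝ o (τ p)).det =
      if (SimpleGraph.fromEdgeSet (Subtype.val '' (T : Set G.edgeSet))).Connected
      then 1 else 0 := by
  split_ifs with hT
  · have hcast : (Matrix.of fun p => incVec ℝ o (τ p)).det =
        ((Matrix.of fun p => incVec ℤ o (τ p)).det : ℝ) := by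
      rw [Int.cast_det]
      congr
      ext p q
      exact (intCast_incVec o _ q).symm
    rw [hcast, ← Int.cast_mul, Int.isUnit_mul_self ((isUnit_det_incVec_iff τ).mpr hT), Int.cast_one]
  · rw [← isUnit_det_incVec_iff (R := ℝ) τ, isUnit_iff_ne_zero, not_not] at hT
    rw [hT, mul_zero]

end Minors

variable [Fintype G.edgeSet]

theorem eval_kirchhoff (o : V) (x : G.edgeSet → ℝ) :
    eval x (kirchhoff G) = (reducedLaplacian G o x).det := by
  classical
  have hcard : Fintype.card {v : V // v ≠ o} = Fintype.card V - 1 := by simp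
  simp only [reducedLaplacian, ← smul_vecMulVec]
  rw [det_sum_vecMulVec, kirchhoff, map_sum, ← Finset.univ_filter_card_eq, Finset.sum_filter]
  refine Finset.sum_congr rfl fun T _ => ?_
  by_cases hT : T.card = Fintype.card {v : V // v ≠ o}
  · have τ : {v : V // v ≠ o} ≃ T := Fintype.equivOfCardEq (by simp [hT])
    simp only [smul_vecMulVec]
    rw [if_pos hT, det_sum_smul_vecMulVec_of_equiv τ, det_incVec_mul_self]
    simp [IsSpanningTree, hT, hcard, apply_ite (eval x)]
  · rw [if_neg hT, if_neg fun h => hT (h.1.trans hcard.symm), map_zero]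

lemma isHomogeneous_kirchhoff : (kirchhoff G).IsHomogeneous (Fintype.card V - 1) := by
  refine IsHomogeneous.sum _ _ _ fun T _ => ?_
  split_ifs with h
  · simpa [h.1] using IsHomogeneous.prod T (fun e => (X e : MvPolynomial G.edgeSet ℝ)) (fun _ => 1)
      fun e _ => isHomogeneous_X ℝ e
  · exact isHomogeneous_zero _ _ _

variable {G} {a : G.edgeSet → ℝ}

lemma eval_kirchhoff_pos (hG : G.Connected) (ha : ∀ e, 0 < a e) : 0 < eval a (kirchhoff G) := by
  obtain ⟨o⟩ := hG.nonempty
  rw [eval_kirchhoff G o]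
  exact (reducedLaplacian_posDef hG ha o).det_pos

theorem isStrictlyHomogLogConcaveAt_kirchhoff (hG : G.Connected) (ha : ∀ e, 0 < a e) :
    IsStrictlyHomogLogConcaveAt a (Fintype.card V - 1) (kirchhoff G) := by
  obtain ⟨o⟩ := hG.nonempty
  rw [show Fintype.card V - 1 = Fintype.card {v : V // v ≠ o} by simp]
  exact isStrictlyHomogLogConcaveAt_of_eval_eq_det
    (fun e => (conjTranspose_eq_transpose_of_trivial _).trans (transpose_vecMulVec _ _))
    (linearIndependent_vecMulVec_incVec o G) (eval_kirchhoff G o) (reducedLaplacian_posDef hG ha o)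

end Kirchhoff

/-- for a finite connected simple graph `Γ` with `r + 1 ≥ 3` vertices and
`n ≥ 3` edges, a point `a` of the open positive orthant, and `0 ≤ ℓ ≤ r - 2`, the iterated
directional derivative `∂_a^ℓ F_Γ` (homogeneous of degree `r - ℓ`) is strictly homogeneous
log-concave at `a`; in particular its Hessian at `a` is nonsingular with exactly one positive
and `n - 1` negative eigenvalues. -/
theorem iterated_dirDeriv_kirchhoff_strictly_homog_logConcave
    {V : Type} [Fintype V] [DecidableEq V] (G : SimpleGraph V) [Fintype G.edgeSet]
    (hconn : G.Connected) (r n : ℕ)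
    (hV : Fintype.card V = r + 1) (hr : 3 ≤ r + 1)
    (hE : Fintype.card G.edgeSet = n) (hn : 3 ≤ n)
    (a : G.edgeSet → ℝ) (ha : ∀ e, 0 < a e)
    (ℓ : ℕ) (hℓ : ℓ ≤ r - 2)
    (Fℓ : MvPolynomial G.edgeSet ℝ)
    (hFℓ : Fℓ = (fun P : MvPolynomial G.edgeSet ℝ =>
      ∑ i : G.edgeSet, a i • pderiv i P)^[ℓ] (kirchhoff G))
    (H : Matrix G.edgeSet G.edgeSet ℝ)
    (hH : H = Matrix.of fun i j : G.edgeSet => eval a (pderiv i (pderiv j Fℓ))) :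
    (∀ s : ℝ, (((r - ℓ : ℕ) : ℝ) - 1) / ((r - ℓ : ℕ) : ℝ) < s →
      (Matrix.of fun i j : G.edgeSet =>
        -(eval a Fℓ) * eval a (pderiv i (pderiv j Fℓ))
          + s * (eval a (pderiv i Fℓ) * eval a (pderiv j Fℓ))).PosDef) ∧
    H.det ≠ 0 ∧
    ∃ hherm : H.IsHermitian,
      (Finset.univ.filter fun i => 0 < hherm.eigenvalues i).card = 1 ∧
      (Finset.univ.filter fun i => hherm.eigenvalues i < 0).card = n - 1 := by
  subst hFℓ hH hE
  obtain rfl : r = Fintype.card V - 1 := by omega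
  have hiter : (fun P : MvPolynomial G.edgeSet ℝ => ∑ i, a i • pderiv i P) = dirDeriv a :=
    funext fun P => (dirDeriv_eq_sum a P).symm
  rw [hiter]
  have hhom := isHomogeneous_kirchhoff G
  have hlc := (isStrictlyHomogLogConcaveAt_kirchhoff hconn ha).iterate_dirDeriv hhom
    (ℓ := ℓ) (by omega)
  have hpos : 0 < eval a ((dirDeriv a)^[ℓ] (kirchhoff G)) := by
    rw [eval_iterate_dirDeriv_self hhom]
    exact mul_pos (by exact_mod_cast Nat.descFactorial_pos.mpr (by omega))
      (eval_kirchhoff_pos hconn ha)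
  have hherm : (hessianAt a ((dirDeriv a)^[ℓ] (kirchhoff G))).IsHermitian :=
    (conjTranspose_eq_transpose_of_trivial _).trans (hessianAt_isSymm _ _)
  obtain ⟨hdet, hsig⟩ := hlc.hessianAt_signature
    (isHomogeneous_iterate_dirDeriv hhom a ℓ) (by omega) hpos hherm
  exact ⟨hlc, hdet, hherm, hsig⟩
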